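/- Let S = {(x₁,1), (x₂,−1)} ⊆ ℝ^d × {−1,+1}, fix ε ∈ [0,∞] and r > 0, and let S' = {(x_i + z_i^{(j)}, y_i) : i ∈ {1,2}, j ∈ [N]} where the z_i^{(j)} are i.i.d. uniform on the sphere of radius r in ℝ^d. There exist absolute constants C₁, C₂ > 0 such that if N > d, then with probability at least 1 − 2e^{−C₂·d·log(N/d)}, the following holds: if R_ε(S ∪ S') ≠ ∅, then there exists f ∈ R_ε(S ∪ S') such that γ_f(S,S') ≤ √(C₁·log(2N/d)/d)·r. -/

import Mathlib

open scoped RealInnerProductSpace ENNReal Classical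
open Metric Set MeasureTheory

noncomputable section

/-- `ℝ^d` with the Euclidean (ℓ²) structure. -/
abbrev Euc (d : ℕ) := EuclideanSpace ℝ (Fin d)

/-- `X₊`: the set of points of `T` with label `1`. -/
def posPts {d : ℕ} (T : Set (Euc d × ℝ)) : Set (Euc d) := {x | (x, (1 : ℝ)) ∈ T}

/-- `X₋`: the set of points of `T` with label `-1`. -/
def negPts {d : ℕ} (T : Set (Euc d × ℝ)) : Set (Euc d) := {x | (x, (-1 : ℝ)) ∈ T}

/-- All labels in `T` are `±1`, i.e. `T ⊆ ℝ^d × {-1, +1}`. -/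
def LabelsPM {d : ℕ} (T : Set (Euc d × ℝ)) : Prop := ∀ p ∈ T, p.2 = 1 ∨ p.2 = -1

/-- `(w, b)` is a linear separator of the labeled set `T`:
`w ≠ 0` and `y(⟨w,x⟩ + b) ≥ 0` for all `(x,y) ∈ T`. -/
def IsLinSep {d : ℕ} (w : Euc d) (b : ℝ) (T : Set (Euc d × ℝ)) : Prop :=
  w ≠ 0 ∧ ∀ p ∈ T, p.2 * (⟪w, p.1⟫ + b) ≥ 0

/-- The hyperplane `H = {x | ⟨w,x⟩ + b = 0}` associated with `(w, b)`. -/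
def hyperplane {d : ℕ} (w : Euc d) (b : ℝ) : Set (Euc d) := {x | ⟪w, x⟫ + b = 0}

/-- The margin `γ_{(w,b)}(S)`: infimum over `(x,y) ∈ S` of the distance from `x`
to the hyperplane of `(w,b)`. -/
def linMargin {d : ℕ} (S : Set (Euc d × ℝ)) (w : Euc d) (b : ℝ) : ℝ :=
  ⨅ p : S, Metric.infDist (p : Euc d × ℝ).1 (hyperplane w b)

/-- `γ` is the max-margin of `S`: attained by some linear separator of `S`, and an upper
bound on the margin of every linear separator of `S`. -/
def IsMaxMargin {d : ℕ} (S : Set (Euc d × ℝ)) (γ : ℝ) : Prop :=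
  (∃ w b, IsLinSep w b S ∧ linMargin S w b = γ) ∧
    ∀ w b, IsLinSep w b S → linMargin S w b ≤ γ

/-- The worst-case margin `α(S,S')` (an extended real): the infimum over all linear
separators of `S ∪ S'` of their margin on `S`, or `-∞` if no separator exists. -/
def alpha {d : ℕ} (S S' : Set (Euc d × ℝ)) : EReal :=
  if ∃ w b, IsLinSep w b (S ∪ S') then
    sInf {m : EReal | ∃ w b, IsLinSep w b (S ∪ S') ∧ m = ((linMargin S w b : ℝ) : EReal)}
  else ⊥

/-- `S_r`: the set of labeled points obtained by moving a point of `S` by distance at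
most `r`, keeping its label; i.e. `((X₊)_r × {1}) ∪ ((X₋)_r × {-1})`. -/
def ballAug {d : ℕ} (S : Set (Euc d × ℝ)) (r : ℝ) : Set (Euc d × ℝ) :=
  {p | (p.2 = 1 ∧ Metric.infDist p.1 (posPts S) ≤ r) ∨
       (p.2 = -1 ∧ Metric.infDist p.1 (negPts S) ≤ r)}

/-- A `{±1}`-valued classifier. -/
def IsClassifier {d : ℕ} (f : Euc d → ℝ) : Prop := ∀ x, f x = 1 ∨ f x = -1

/-- `f` separates the labeled set `T`: `f x = y` for all `(x,y) ∈ T`. -/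
def Separates {d : ℕ} (f : Euc d → ℝ) (T : Set (Euc d × ℝ)) : Prop :=
  ∀ p ∈ T, f p.1 = p.2

/-- The circumradius of `A`: the radius of the smallest closed ball containing `A`
(as an extended nonnegative real). -/
def circumradius {d : ℕ} (A : Set (Euc d)) : ℝ≥0∞ :=
  ⨅ c : Euc d, ⨆ x ∈ A, edist c x

/-- `f` is `ε`-respectful of `T`: `f = 1` on the convex hull of any subset of `X₊(T)` of
circumradius at most `ε`, and `f = -1` on the convex hull of any subset of `X₋(T)` of
circumradius at most `ε`. (Taking `ε = ⊤` gives respectful classifiers.) -/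
def RespectfulOf {d : ℕ} (ε : ℝ≥0∞) (f : Euc d → ℝ) (T : Set (Euc d × ℝ)) : Prop :=
  (∀ A ⊆ posPts T, circumradius A ≤ ε → ∀ x ∈ convexHull ℝ A, f x = 1) ∧
  (∀ B ⊆ negPts T, circumradius B ≤ ε → ∀ x ∈ convexHull ℝ B, f x = -1)

/-- `R_ε(T)`, the set of `ε`-respectful classifiers of `T`. -/
def respectfulSet {d : ℕ} (ε : ℝ≥0∞) (T : Set (Euc d × ℝ)) : Set (Euc d → ℝ) :=
  {f | IsClassifier f ∧ RespectfulOf ε f T}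

/-- The margin `γ_f(S)` of a classifier `f` on `S`:
`min_{(x,y) ∈ S} d(x, f⁻¹(-y))`. -/
def clsMargin {d : ℕ} (f : Euc d → ℝ) (S : Set (Euc d × ℝ)) : ℝ :=
  ⨅ p : S, Metric.infDist (p : Euc d × ℝ).1 (f ⁻¹' {-(p : Euc d × ℝ).2})

/-- `γ_f(S,S')`: the margin of `f` on `S` if `f` separates `S ∪ S'`, and `-∞` otherwise. -/
def clsMarginAug {d : ℕ} (f : Euc d → ℝ) (S S' : Set (Euc d × ℝ)) : EReal :=
  if Separates f (S ∪ S') then ((clsMargin f S : ℝ) : EReal) else ⊥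

/-- The distance `d(P, Q) = inf {d(a,b) | a ∈ P, b ∈ Q}` between two sets,
as an extended nonnegative real. -/
def setSepDist {d : ℕ} (P Q : Set (Euc d)) : ℝ≥0∞ :=
  ⨅ a ∈ P, EMetric.infEdist a Q

/-- The uniform (rotation-invariant) probability measure on the sphere of radius `r`
centered at the origin in `ℝ^d`, obtained by normalizing the surface measure induced by
Lebesgue measure on the unit sphere and pushing forward by scaling by `r`. -/
def uniformSphere (d : ℕ) (r : ℝ) : Measure (Euc d) :=
  (((volume : Measure (Euc d)).toSphere) Set.univ)⁻¹ •
    ((((volume : Measure (Euc d)).toSphere).map (Subtype.val)).map (fun x => r • x))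

end

/-!
Almost surely every perturbation has norm `r`, and this is all that is used of the randomness. Among
the respectful classifiers, take the one that is `1` only where it is forced to be. Its positive
region lies in the convex hull of the `N + 1` positive points, so its margin at `x₁` is at most the
inradius of that hull. By Maurey's empirical method, each point of the hull is within `2r / √k` of
the mean of some `k` of the points, with repetition. Hence at most `(N + k).choose k` balls of this
radius cover the hull, and a comparison of volumes with `k` of order `d / log (2N / d)` bounds the
inradius.
-/

section Maurey

variable {E : Type*} [NormedAddCommGroup E] [InnerProductSpace ℝ E]

-- Derandomized Maurey argument: as `x` is an average of points of `s`, some `y ∈ s` satisfies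
-- `⟪v, y - x⟫ ≤ 0` for the current error `v`, so adding it costs at most `‖y - x‖ ^ 2`.
theorem exists_multiset_norm_sum_sub_smul_sq_le {s : Set E} {x : E} {D : ℝ}
    (hx : x ∈ convexHull ℝ s) (hD : ∀ y ∈ s, ‖y - x‖ ≤ D) (k : ℕ) :
    ∃ m : Multiset E, m.card = k ∧ (∀ y ∈ m, y ∈ s) ∧
      ‖m.sum - (k : ℝ) • x‖ ^ 2 ≤ k * D ^ 2 := by
  induction k with
  | zero => exact ⟨0, by simp⟩
  | succ k ih =>
    obtain ⟨m, hcard, hms, hm⟩ := ih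
    set v := m.sum - (k : ℝ) • x with hv
    have hconcave : ConcaveOn ℝ (convexHull ℝ s) fun y => ⟪v, y⟫ :=
      (innerSL ℝ v).toLinearMap.concaveOn (convex_convexHull ℝ s)
    obtain ⟨y, hys, hy⟩ : ∃ y ∈ s, ⟪v, y⟫ ≤ ⟪v, x⟫ :=
      hconcave.exists_le_of_mem_convexHull (subset_convexHull ℝ s) hx
    refine ⟨y ::ₘ m, by simp [hcard], by simpa [hys] using hms, ?_⟩
    have hstep : (y ::ₘ m).sum - ((k + 1 : ℕ) : ℝ) • x = v + (y - x) := by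
      rw [hv, Multiset.sum_cons]
      push_cast
      module
    have hinner : ⟪v, y - x⟫ ≤ 0 := by
      rw [inner_sub_right]
      exact sub_nonpos.2 hy
    calc ‖(y ::ₘ m).sum - ((k + 1 : ℕ) : ℝ) • x‖ ^ 2
        = ‖v‖ ^ 2 + 2 * ⟪v, y - x⟫ + ‖y - x‖ ^ 2 := by rw [hstep, norm_add_sq_real]
      _ ≤ k * D ^ 2 + 2 * 0 + D ^ 2 := by
        gcongr
        exact hD y hys
      _ = ((k + 1 : ℕ) : ℝ) * D ^ 2 := by
        push_cast
        ring

theorem convexHull_subset_biUnion_sym_closedBall (P : Finset E) {k : ℕ} (hk : k ≠ 0) :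
    convexHull ℝ (P : Set E) ⊆
      ⋃ m ∈ P.sym k, closedBall ((k : ℝ)⁻¹ • (m : Multiset E).sum)
        (diam (P : Set E) / √k) := by
  intro x hx
  have hdiam : ∀ y ∈ (P : Set E), ‖y - x‖ ≤ diam (P : Set E) := fun y hy => by
    rw [← dist_eq_norm, ← convexHull_diam]
    exact dist_le_diam_of_mem (isBounded_convexHull.2 P.finite_toSet.isBounded)
      (subset_convexHull ℝ _ hy) hx
  obtain ⟨m, hcard, hmP, hm⟩ := exists_multiset_norm_sum_sub_smul_sq_le hx hdiam k
  have hk₀ : (0 : ℝ) < k := by positivity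
  refine mem_iUnion₂.2 ⟨⟨m, hcard⟩, Finset.mem_sym_iff.2 hmP, ?_⟩
  have hfactor : x - (k : ℝ)⁻¹ • m.sum = -((k : ℝ)⁻¹ • (m.sum - (k : ℝ) • x)) := by
    rw [smul_sub, inv_smul_smul₀ hk₀.ne', neg_sub]
  rw [mem_closedBall, dist_eq_norm]
  refine le_of_sq_le_sq ?_ (by positivity)
  calc ‖x - (k : ℝ)⁻¹ • m.sum‖ ^ 2
      = (k : ℝ)⁻¹ ^ 2 * ‖m.sum - (k : ℝ) • x‖ ^ 2 := by
        rw [hfactor, norm_neg, norm_smul, mul_pow, Real.norm_of_nonneg (by positivity)]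
    _ ≤ (k : ℝ)⁻¹ ^ 2 * (k * diam (P : Set E) ^ 2) := by gcongr
    _ = (diam (P : Set E) / √k) ^ 2 := by
      rw [div_pow, Real.sq_sqrt hk₀.le]
      field_simp

end Maurey

theorem pow_finrank_le_card_mul_of_ball_subset_biUnion {E ι : Type*} [NormedAddCommGroup E]
    [NormedSpace ℝ E] [FiniteDimensional ℝ E] [Nontrivial E] {t : Finset ι} {q : ι → E} {c : E}
    {R s : ℝ} (hR : 0 ≤ R) (hs : 0 ≤ s) (h : ball c R ⊆ ⋃ i ∈ t, closedBall (q i) s) :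
    R ^ Module.finrank ℝ E ≤ t.card * s ^ Module.finrank ℝ E := by
  borelize E
  let μ : Measure E := Measure.addHaar
  have hμ : μ (ball c R) ≤ ∑ i ∈ t, μ (closedBall (q i) s) :=
    (measure_mono h).trans (measure_biUnion_finset_le t _)
  simp only [Measure.addHaar_ball _ _ hR, Measure.addHaar_closedBall _ _ hs, Finset.sum_const,
    nsmul_eq_mul] at hμ
  rwa [← mul_assoc, ENNReal.mul_le_mul_iff_left (measure_ball_pos _ _ one_pos).ne'
    measure_ball_lt_top.ne, ← ENNReal.ofReal_natCast, ← ENNReal.ofReal_mul (by positivity),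
    ENNReal.ofReal_le_ofReal_iff (by positivity)] at hμ

theorem card_finset_sym {α : Type*} [DecidableEq α] (s : Finset α) (k : ℕ) :
    (s.sym k).card = s.card.multichoose k := by
  rw [← Finset.attach_map_val (s := s), Finset.sym_map, Finset.card_map, ← Finset.univ_eq_attach,
    Finset.sym_univ, Finset.card_univ, Sym.card_sym_eq_multichoose, Fintype.card_coe,
    Finset.card_map, Finset.univ_eq_attach, Finset.card_attach]

theorem choose_le_exp_one_mul_div_pow (n k : ℕ) :
    (n.choose k : ℝ) ≤ (Real.exp 1 * (n / k)) ^ k := by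
  rcases k.eq_zero_or_pos with rfl | hk
  · simp
  calc (n.choose k : ℝ) ≤ (n : ℝ) ^ k / k.factorial := Nat.choose_le_pow_div k n
    _ = (k : ℝ) ^ k / k.factorial * (n / k : ℝ) ^ k := by
      rw [div_pow]
      field_simp
    _ ≤ Real.exp k * (n / k : ℝ) ^ k := by
      gcongr
      exact Real.pow_div_factorial_le_exp _ k.cast_nonneg k
    _ = (Real.exp 1 * (n / k)) ^ k := by rw [mul_pow, Real.exp_one_pow]

theorem half_lt_log_two_mul_div {d N : ℝ} (hd : 0 < d) (hdN : d ≤ N) :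
    1 / 2 < Real.log (2 * N / d) := by
  have hlog : Real.log 2 ≤ Real.log (2 * N / d) :=
    Real.log_le_log two_pos <| (le_div_iff₀ hd).2 (by gcongr)
  linarith [Real.log_two_gt_d9]

theorem exp_one_mul_add_div_le_exp {d N k : ℝ} (hd : 0 < d) (hdN : d ≤ N) (hk : 0 < k)
    (hdk : d ≤ 2 * k * Real.log (2 * N / d)) :
    Real.exp 1 * ((N + k) / k) ≤ Real.exp (3 * Real.log (2 * N / d)) := by
  have hN : 0 < N := hd.trans_le hdN
  set L := Real.log (2 * N / d)
  have hL : 1 / 2 < L := half_lt_log_two_mul_div hd hdN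
  have hexp : Real.exp L = 2 * N / d := Real.exp_log (by positivity)
  have htwo : 2 ≤ Real.exp L := by
    rw [hexp, le_div_iff₀ hd]
    gcongr
  have hratio : d / (2 * k) ≤ L := by
    rw [div_le_iff₀ (by positivity)]
    linarith
  calc Real.exp 1 * ((N + k) / k)
      = Real.exp 1 * (Real.exp L * (d / (2 * k)) + 1) := by
        rw [hexp]
        field_simp
    _ ≤ Real.exp 1 * (Real.exp L * L + Real.exp L * (1 / 2)) := by
      gcongr
      linarith
    _ = Real.exp 1 * (Real.exp L * ((L - 1 / 2) + 1)) := by ring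
    _ ≤ Real.exp 1 * (Real.exp L * Real.exp (L - 1 / 2)) := by
      gcongr
      exact Real.add_one_le_exp _
    _ = Real.exp (2 * L + 1 / 2) := by
      rw [← Real.exp_add, ← Real.exp_add]
      ring_nf
    _ ≤ Real.exp (3 * L) := Real.exp_le_exp.2 (by linarith)

theorem exp_one_mul_add_div_pow_le_exp_three_pow {d k : ℕ} {N : ℝ} (hd : 0 < d) (hdN : d ≤ N)
    (hk : 0 < k) (hkd : k * Real.log (2 * N / d) ≤ d) (hdk : d ≤ 2 * k * Real.log (2 * N / d)) :
    (Real.exp 1 * ((N + k) / k)) ^ k ≤ Real.exp 3 ^ d := by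
  have hN : 0 ≤ N := d.cast_nonneg.trans hdN
  calc (Real.exp 1 * ((N + k) / k)) ^ k ≤ Real.exp (3 * Real.log (2 * N / d)) ^ k := by
        gcongr
        exact exp_one_mul_add_div_le_exp (by positivity) hdN (by positivity) hdk
    _ = Real.exp (3 * (k * Real.log (2 * N / d))) := by
      rw [← Real.exp_nat_mul, mul_left_comm]
    _ ≤ Real.exp (3 * d) := by gcongr
    _ = Real.exp 3 ^ d := by rw [← Real.exp_nat_mul, mul_comm]

theorem exists_nat_mul_le_and_le_two_mul {a b : ℝ} (ha : 0 < a) (hab : a ≤ b) :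
    ∃ k : ℕ, 0 < k ∧ k * a ≤ b ∧ b ≤ 2 * k * a := by
  have hfloor : 0 < ⌊b / a⌋₊ := Nat.floor_pos.2 ((one_le_div ha).2 hab)
  refine ⟨⌊b / a⌋₊, hfloor, ?_, ?_⟩
  · exact (le_div_iff₀ ha).1 (Nat.floor_le (div_nonneg (ha.le.trans hab) ha.le))
  · have hone : (1 : ℝ) ≤ ⌊b / a⌋₊ := by exact_mod_cast hfloor
    exact (div_le_iff₀ ha).1 (by linarith [Nat.lt_floor_add_one (b / a)])

theorem two_mul_le_diam_of_ball_subset_convexHull {E : Type*} [NormedAddCommGroup E]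
    [NormedSpace ℝ E] [Nontrivial E] {s : Set E} {c : E} {R : ℝ} (hs : Bornology.IsBounded s)
    (hR : 0 ≤ R) (h : ball c R ⊆ convexHull ℝ s) : 2 * R ≤ diam s := by
  rw [← diam_ball_eq c hR, ← convexHull_diam s]
  exact diam_mono h (isBounded_convexHull.2 hs)

section Inradius

variable {E : Type*} [NormedAddCommGroup E] [InnerProductSpace ℝ E] [FiniteDimensional ℝ E]
  [Nontrivial E] {P : Finset E} {N : ℕ} {c : E} {R : ℝ}

theorem pow_finrank_le_of_ball_subset_convexHull (hR : 0 ≤ R) (hP : P.card ≤ N + 1)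
    (h : ball c R ⊆ convexHull ℝ (P : Set E)) {k : ℕ} (hk : k ≠ 0) :
    R ^ Module.finrank ℝ E ≤ (Real.exp 1 * ((N + k) / k)) ^ k *
      (diam (P : Set E) / √k) ^ Module.finrank ℝ E := by
  have hs : 0 ≤ diam (P : Set E) / √k := by positivity
  have hcard : ((P.sym k).card : ℝ) ≤ (Real.exp 1 * ((N + k) / k)) ^ k := by
    calc ((P.sym k).card : ℝ) ≤ ((N + k).choose k : ℕ) := by
          rw [card_finset_sym, Nat.multichoose_eq]
          exact_mod_cast Nat.choose_le_choose k (by lia)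
      _ ≤ (Real.exp 1 * ((N + k) / k)) ^ k := by
        exact_mod_cast choose_le_exp_one_mul_div_pow (N + k) k
  exact (pow_finrank_le_card_mul_of_ball_subset_biUnion hR hs
    (h.trans (convexHull_subset_biUnion_sym_closedBall P hk))).trans (by gcongr)

-- With `L = log (2N / d)`, the choice `k = ⌊d / L⌋` balances the number `exp (O(k L))` of balls in
-- the Maurey cover against the factor `k ^ (-d / 2)` gained in their volume.
theorem le_sqrt_mul_diam_of_ball_subset_convexHull (hN : Module.finrank ℝ E ≤ N)
    (hP : P.card ≤ N + 1) (h : ball c R ⊆ convexHull ℝ (P : Set E)) :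
    R ≤ √(2 * Real.exp 6 * Real.log (2 * N / Module.finrank ℝ E) / Module.finrank ℝ E) *
      diam (P : Set E) := by
  rcases le_total R 0 with hR | hR
  · exact hR.trans (by positivity)
  have hd₀ : 0 < Module.finrank ℝ E := Module.finrank_pos
  set d := Module.finrank ℝ E
  have hd : (0 : ℝ) < d := by positivity
  have hdN : (d : ℝ) ≤ N := by exact_mod_cast hN
  have hL := half_lt_log_two_mul_div hd hdN
  set L := Real.log (2 * N / d)
  rcases lt_or_ge (d : ℝ) L with hdL | hLd
  · have hRdiam : 2 * R ≤ diam (P : Set E) :=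
      two_mul_le_diam_of_ball_subset_convexHull P.finite_toSet.isBounded hR h
    have hfactor : 1 ≤ √(2 * Real.exp 6 * L / d) := by
      rw [Real.one_le_sqrt, le_div_iff₀ hd]
      nlinarith [Real.add_one_le_exp 6]
    exact (show R ≤ diam (P : Set E) by linarith).trans (le_mul_of_one_le_left diam_nonneg hfactor)
  obtain ⟨k, hk, hkd, hdk⟩ := exists_nat_mul_le_and_le_two_mul (by linarith) hLd
  have hpow : R ^ d ≤ (Real.exp 3 * (diam (P : Set E) / √k)) ^ d := by
    rw [mul_pow]
    refine (pow_finrank_le_of_ball_subset_convexHull hR hP h hk.ne').trans ?_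
    gcongr
    exact exp_one_mul_add_div_pow_le_exp_three_pow hd₀ hdN hk hkd hdk
  calc R ≤ Real.exp 3 * (diam (P : Set E) / √k) :=
        le_of_pow_le_pow_left₀ hd₀.ne' (by positivity) hpow
    _ = √(Real.exp 6 / k) * diam (P : Set E) := by
      have hexp : √(Real.exp 6) = Real.exp 3 := by
        rw [← Real.exp_half]
        norm_num
      rw [Real.sqrt_div (Real.exp_nonneg 6), hexp]
      ring
    _ ≤ √(2 * Real.exp 6 * L / d) * diam (P : Set E) := by
      gcongr ?_ * _
      refine Real.sqrt_le_sqrt ((div_le_div_iff₀ (by positivity) hd).2 ?_)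
      nlinarith [Real.exp_pos 6]

end Inradius

section Classifier

variable {d : ℕ} {ε : ℝ≥0∞} {T : Set (Euc d × ℝ)}

/-- The classifier that is `1` exactly on the convex hulls of the sets of positive points of `T` of
circumradius at most `ε`: among the `ε`-respectful classifiers of `T`, the one with the smallest
positive region. -/
noncomputable def hullClassifier (ε : ℝ≥0∞) (T : Set (Euc d × ℝ)) (y : Euc d) : ℝ :=
  if ∃ A ⊆ posPts T, circumradius A ≤ ε ∧ y ∈ convexHull ℝ A then 1 else -1

theorem hullClassifier_mem_respectfulSet (h : (respectfulSet ε T).Nonempty) :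
    hullClassifier ε T ∈ respectfulSet ε T := by
  obtain ⟨g, -, hgpos, hgneg⟩ := h
  refine ⟨fun y => ite_eq_or_eq _ _ _, fun A hA hAε y hy => if_pos ⟨A, hA, hAε, hy⟩, ?_⟩
  refine fun B hB hBε y hy => if_neg ?_
  rintro ⟨A, hA, hAε, hyA⟩
  have hcontra : (1 : ℝ) = -1 := (hgpos A hA hAε y hyA).symm.trans (hgneg B hB hBε y hy)
  norm_num at hcontra

theorem compl_preimage_hullClassifier_subset_convexHull :
    (hullClassifier ε T ⁻¹' {-1})ᶜ ⊆ convexHull ℝ (posPts T) := by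
  refine compl_subset_comm.1 fun y hy => if_neg ?_
  rintro ⟨A, hA, -, hyA⟩
  exact hy (convexHull_mono hA hyA)

theorem clsMarginAug_le_infDist (f : Euc d → ℝ) {S : Set (Euc d × ℝ)} (S' : Set (Euc d × ℝ))
    {p : Euc d × ℝ} (hp : p ∈ S) :
    clsMarginAug f S S' ≤ (infDist p.1 (f ⁻¹' {-p.2}) : ℝ) := by
  rw [clsMarginAug]
  split_ifs
  · refine EReal.coe_le_coe_iff.2 (ciInf_le (ι := S) ⟨0, ?_⟩ ⟨p, hp⟩)
    rintro _ ⟨q, rfl⟩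
    exact infDist_nonneg
  · exact bot_le

theorem posPts_pair_union_range {N : ℕ} (x₁ x₂ : Euc d) (z : Fin 2 × Fin N → Euc d) :
    posPts ({(x₁, (1 : ℝ)), (x₂, (-1 : ℝ))} ∪ Set.range fun p : Fin 2 × Fin N =>
      (![x₁, x₂] p.1 + z p, ![(1 : ℝ), -1] p.1)) =
      insert x₁ (Set.range fun j => x₁ + z (0, j)) := by
  have hne : (-1 : ℝ) ≠ 1 := by norm_num
  ext y
  simp [posPts, hne, hne.symm]

end Classifier

theorem isProbabilityMeasure_uniformSphere {d : ℕ} (hd : 0 < d) (r : ℝ) :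
    IsProbabilityMeasure (uniformSphere d r) := by
  have : Nonempty (Fin d) := ⟨⟨0, hd⟩⟩
  have : NeZero (volume : Measure (Euc d)).toSphere := ⟨Measure.toSphere_ne_zero _⟩
  rw [uniformSphere, ← Measure.map_smul, ← Measure.map_smul]
  have := Measure.isProbabilityMeasure_map
    (μ := ((volume : Measure (Euc d)).toSphere univ)⁻¹ • (volume : Measure (Euc d)).toSphere)
    measurable_subtype_coe.aemeasurable
  exact Measure.isProbabilityMeasure_map (by fun_prop)

theorem ae_uniformSphere_norm_eq (d : ℕ) (r : ℝ) : ∀ᵐ z ∂uniformSphere d r, ‖z‖ = |r| := by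
  have hsphere : MeasurableSet {z : Euc d | ‖z‖ = |r|} :=
    measurableSet_eq_fun measurable_norm measurable_const
  have hsmul : Measurable fun z : Euc d => r • z := by fun_prop
  refine Measure.ae_smul_measure ((ae_map_iff hsmul.aemeasurable hsphere).2 ?_) _
  refine (ae_map_iff measurable_subtype_coe.aemeasurable (hsmul hsphere)).2 ?_
  exact .of_forall fun z => by simp [norm_smul]

theorem ae_pi_uniformSphere_forall_norm_eq {ι : Type*} [Fintype ι] {d : ℕ} (hd : 0 < d) (r : ℝ) :
    ∀ᵐ z ∂Measure.pi fun _ : ι => uniformSphere d r, ∀ i, ‖z i‖ = |r| := by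
  have := isProbabilityMeasure_uniformSphere hd r
  exact ae_all_iff.2 fun i => (Measure.tendsto_eval_ae_ae
    (μ := fun _ : ι => uniformSphere d r) (i := i)).eventually (ae_uniformSphere_norm_eq d r)

theorem respectful_margin_upper_bound_general {d N : ℕ} (hd : 0 < d) (hdN : d ≤ N)
    {S S' : Set (Euc d × ℝ)} {x : Euc d} (hx : (x, (1 : ℝ)) ∈ S) {r : ℝ}
    (hcard : (posPts (S ∪ S')).encard ≤ N + 1) (hball : posPts (S ∪ S') ⊆ closedBall x r)
    {ε : ℝ≥0∞} (hne : (respectfulSet ε (S ∪ S')).Nonempty) :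
    ∃ f ∈ respectfulSet ε (S ∪ S'),
      clsMarginAug f S S' ≤
        ((√(8 * Real.exp 6 * Real.log (2 * (N : ℝ) / d) / d) * r : ℝ) : EReal) := by
  have : Nonempty (Fin d) := ⟨⟨0, hd⟩⟩
  refine ⟨_, hullClassifier_mem_respectfulSet hne,
    (clsMarginAug_le_infDist _ S' hx).trans (EReal.coe_le_coe_iff.2 ?_)⟩
  have hhull : ball x (infDist x (hullClassifier ε (S ∪ S') ⁻¹' {-1})) ⊆
      convexHull ℝ (posPts (S ∪ S')) :=
    ball_infDist_subset_compl.trans compl_preimage_hullClassifier_subset_convexHull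
  have hr : 0 ≤ r := nonempty_closedBall.1 ⟨x, hball (.inl hx)⟩
  have hfin : (posPts (S ∪ S')).Finite :=
    finite_of_encard_le_coe (k := N + 1) (by exact_mod_cast hcard)
  lift posPts (S ∪ S') to Finset (Euc d) using hfin with P
  have hP : P.card ≤ N + 1 := by
    rw [encard_coe_eq_coe_finsetCard] at hcard
    exact_mod_cast hcard
  have hconst : √(8 * Real.exp 6 * Real.log (2 * N / d) / d) =
      √(2 * Real.exp 6 * Real.log (2 * N / d) / d) * 2 := by
    rw [← Real.sqrt_sq zero_le_two, ← Real.sqrt_mul' _ (by positivity), Real.sqrt_sq zero_le_two]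
    ring_nf
  calc infDist x (hullClassifier ε (S ∪ S') ⁻¹' {-1})
      ≤ √(2 * Real.exp 6 * Real.log (2 * N / d) / d) * diam (P : Set (Euc d)) := by
        simpa only [finrank_euclideanSpace_fin] using
          le_sqrt_mul_diam_of_ball_subset_convexHull (by simpa using hdN) hP hhull
    _ ≤ √(2 * Real.exp 6 * Real.log (2 * N / d) / d) * (2 * r) := by
      gcongr
      exact diam_le_of_subset_closedBall hr hball
    _ = √(8 * Real.exp 6 * Real.log (2 * N / d) / d) * r := by
      rw [hconst]
      ring

/-- Theorem 22 of the paper: for `S = {(x₁,1),(x₂,-1)}` augmented by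
`N > d` uniform spherical perturbations of radius `r` of each point, there are absolute
constants `C₁, C₂ > 0` such that with probability at least `1 - 2e^{-C₂ d log(N/d)}`,
if `R_ε(S ∪ S') ≠ ∅` then some `f ∈ R_ε(S ∪ S')` has
`γ_f(S,S') ≤ √(C₁ log(2N/d)/d)·r`. -/
theorem respectful_margin_upper_bound :
    ∃ C₁ C₂ : ℝ, 0 < C₁ ∧ 0 < C₂ ∧ ∀ (d N : ℕ), 0 < d → d < N →
      ∀ (x₁ x₂ : Euc d) (ε : ℝ≥0∞) (r : ℝ), 0 < r →
      ∀ S : Set (Euc d × ℝ), S = {(x₁, (1 : ℝ)), (x₂, (-1 : ℝ))} →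
      ∀ S' : (Fin 2 × Fin N → Euc d) → Set (Euc d × ℝ),
        (∀ z, S' z = Set.range fun p : Fin 2 × Fin N =>
          (![x₁, x₂] p.1 + z p, ![(1 : ℝ), -1] p.1)) →
      ENNReal.ofReal (1 - 2 * Real.exp (-C₂ * d * Real.log ((N : ℝ) / d))) ≤
        (Measure.pi fun _ : Fin 2 × Fin N => uniformSphere d r)
          {z | (respectfulSet ε (S ∪ S' z)).Nonempty →
            ∃ f ∈ respectfulSet ε (S ∪ S' z),
              clsMarginAug f S (S' z) ≤
                ((Real.sqrt (C₁ * Real.log (2 * (N : ℝ) / d) / d) * r : ℝ) : EReal)} := by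
  refine ⟨8 * Real.exp 6, 1, by positivity, one_pos, ?_⟩
  rintro d N hd hN x₁ x₂ ε r hr S rfl S' hS'
  have := isProbabilityMeasure_uniformSphere hd r
  calc ENNReal.ofReal (1 - 2 * Real.exp (-1 * d * Real.log ((N : ℝ) / d))) ≤ 1 := by
        rw [ENNReal.ofReal_le_one]
        linarith [Real.exp_nonneg (-1 * d * Real.log ((N : ℝ) / d))]
    _ = (Measure.pi fun _ : Fin 2 × Fin N => uniformSphere d r) univ := measure_univ.symm
    _ ≤ _ := measure_mono_ae ?_
  filter_upwards [ae_pi_uniformSphere_forall_norm_eq hd r] with z hz _ hne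
  have hpos := posPts_pair_union_range x₁ x₂ z
  rw [← hS' z] at hpos
  refine respectful_margin_upper_bound_general hd hN.le (mem_insert _ _) ?_ ?_ hne <;> rw [hpos]
  · grw [encard_insert_le, ← image_univ, encard_image_le]
    simp
  · refine insert_subset (mem_closedBall_self hr.le) ?_
    rintro _ ⟨j, rfl⟩
    simp [hz, abs_of_pos hr]
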